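/- Let P_k be a homogeneous harmonic polynomial of degree k on ℝⁿ and α ∈ ℂ with Re α > -k-1. Then the dual Radon transform of the function (p, ω) ↦ |p|^α P_k(p ω) equals B(α, k) |x|^α P_k(x), where B(α, k) = 2^{-(α+k)} Γ(α+k+1) Γ(n/2) / (Γ((α+2)/2) Γ((α+2k+n)/2)). -/

import Mathlib

open MeasureTheory
open scoped RealInnerProductSpace

/-- The surface measure on the unit sphere `S^{n-1} ⊂ ℝⁿ`. -/
noncomputable def sphereMeasure (n : ℕ) :
    Measure (Metric.sphere (0 : EuclideanSpace ℝ (Fin n)) 1) :=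
  (volume : Measure (EuclideanSpace ℝ (Fin n))).toSphere

/-- The total area `A_n` of the unit sphere `S^{n-1}`. -/
noncomputable def sphereArea (n : ℕ) : ℝ := (sphereMeasure n Set.univ).toReal

/-- The dual Radon transform of a complex-valued function `φ(p, ω)`:
`S[φ](x) = (1/A_n) ∫_{S^{n-1}} φ(⟨x, ω⟩, ω) dω`. -/
noncomputable def dualRadonC (n : ℕ) (φ : ℝ → EuclideanSpace ℝ (Fin n) → ℂ)
    (x : EuclideanSpace ℝ (Fin n)) : ℂ :=
  (1 / (sphereArea n) : ℂ) *
    ∫ ω : Metric.sphere (0 : EuclideanSpace ℝ (Fin n)) 1,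
      φ ⟪x, (ω : EuclideanSpace ℝ (Fin n))⟫ (ω : EuclideanSpace ℝ (Fin n)) ∂(sphereMeasure n)

/-- The Laplacian of a complex-valued function on `ℝⁿ`. -/
noncomputable def laplacian {n : ℕ} (P : EuclideanSpace ℝ (Fin n) → ℂ)
    (x : EuclideanSpace ℝ (Fin n)) : ℂ :=
  ∑ i : Fin n,
    fderiv ℝ (fun y => fderiv ℝ P y (EuclideanSpace.single i (1 : ℝ))) x
      (EuclideanSpace.single i (1 : ℝ))

/-!
For a unit vector `u` and a standard Gaussian vector `y`, the expectation of
`|⟪u, y⟫| ^ α * ⟪u, y⟫ ^ k * P y` is computed in two ways.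

Writing `k P` as `∑ i, ⟪b i, y⟫ * ∂ᵢ P` (Euler) in an orthonormal basis `b` containing `u` and
integrating by parts against the Gaussian in the directions orthogonal to `u`, harmonicity of `P`
gives `k 𝔼[f ⟪u, y⟫ P] = 𝔼[⟪u, y⟫ f ⟪u, y⟫ ∂ᵤP] - 𝔼[f ⟪u, y⟫ ∂ᵤ²P]`. This is the three-term
recursion of the Hermite polynomials, so `𝔼[f ⟪u, y⟫ P y] = P u * 𝔼[f t * Heₖ t]`: a Gaussian form
of the Funk–Hecke formula. For `f t = |t| ^ α * t ^ k` the same recursion evaluates the last factor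
in terms of the Gamma function.

In polar coordinates, on the other hand, the expectation is a Gamma factor times the average over
the sphere, which is the dual Radon transform at `u`. Homogeneity passes from `u` to every point.
-/

open ProbabilityTheory
open scoped Topology

section DirectionalDerivative

open scoped ContDiff

variable {E F : Type*} [NormedAddCommGroup E] [NormedSpace ℝ E]
  [NormedAddCommGroup F] [NormedSpace ℝ F] {P : E → F}

/-- The derivative of `P` along the fixed vector `v`. The direction comes first, so that
`dirDeriv v` acts on functions and can be iterated. -/
noncomputable def dirDeriv (v : E) (P : E → F) (y : E) : F :=
  fderiv ℝ P y v

theorem contDiff_dirDeriv (hP : ContDiff ℝ ∞ P) (v : E) : ContDiff ℝ ∞ (dirDeriv v P) :=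
  (hP.fderiv_right (m := ∞) le_rfl).clm_apply contDiff_const

theorem dirDeriv_dirDeriv (hP : ContDiff ℝ ∞ P) (v w x : E) :
    dirDeriv v (dirDeriv w P) x = fderiv ℝ (fderiv ℝ P) x v w := by
  have h : DifferentiableAt ℝ (fderiv ℝ P) x :=
    (hP.fderiv_right (m := ∞) le_rfl).differentiable (by simp) x
  change fderiv ℝ (fun y => fderiv ℝ P y w) x v = _
  rw [(h.hasFDerivAt.clm_apply (hasFDerivAt_const w x)).fderiv]
  simp

theorem dirDeriv_comm (hP : ContDiff ℝ ∞ P) (v w : E) :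
    dirDeriv v (dirDeriv w P) = dirDeriv w (dirDeriv v P) := by
  ext x
  rw [dirDeriv_dirDeriv hP, dirDeriv_dirDeriv hP]
  exact (hP.contDiffAt.isSymmSndFDerivAt (by simpa using ENat.LEInfty.out)).eq v w

theorem dirDeriv_sum {ι : Type*} (s : Finset ι) {Q : ι → E → F}
    (hQ : ∀ i ∈ s, Differentiable ℝ (Q i)) (v : E) :
    dirDeriv v (fun x => ∑ i ∈ s, Q i x) = fun x => ∑ i ∈ s, dirDeriv v (Q i) x := by
  ext x
  simp [dirDeriv, fderiv_fun_sum fun i hi => hQ i hi x]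

end DirectionalDerivative

section SolidHarmonics

open scoped ContDiff
open InnerProductSpace

variable {E : Type*} [NormedAddCommGroup E] [InnerProductSpace ℝ E] [FiniteDimensional ℝ E]

theorem laplacian_eq_sum_dirDeriv {ι F : Type*} [Fintype ι] [NormedAddCommGroup F]
    [NormedSpace ℝ F] {P : E → F} (hP : ContDiff ℝ ∞ P) (b : OrthonormalBasis ι ℝ E) (x : E) :
    Laplacian.laplacian P x = ∑ i, dirDeriv (b i) (dirDeriv (b i) P) x := by
  simp [laplacian_eq_iteratedFDeriv_orthonormalBasis P b, iteratedFDeriv_two_apply,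
    dirDeriv_dirDeriv hP]

theorem laplacian_dirDeriv {F : Type*} [NormedAddCommGroup F] [NormedSpace ℝ F] {P : E → F}
    (hP : ContDiff ℝ ∞ P) (v : E) :
    Laplacian.laplacian (dirDeriv v P) = dirDeriv v (Laplacian.laplacian P) := by
  let b := stdOrthonormalBasis ℝ E
  have hΔ : Laplacian.laplacian P = fun x => ∑ i, dirDeriv (b i) (dirDeriv (b i) P) x :=
    funext (laplacian_eq_sum_dirDeriv hP b)
  ext x
  rw [hΔ, dirDeriv_sum _ fun i _ =>
      (contDiff_dirDeriv (contDiff_dirDeriv hP _) _).differentiable (by simp),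
    laplacian_eq_sum_dirDeriv (contDiff_dirDeriv hP v) b]
  refine Finset.sum_congr rfl fun i _ => ?_
  rw [dirDeriv_comm hP _ v, dirDeriv_comm (contDiff_dirDeriv hP _) _ v]

/-- Solid harmonics of degree `k`: smooth harmonic functions which are positively homogeneous of
degree `k`. Smoothness at the origin forces them to be polynomials. -/
structure IsSolidHarmonic (k : ℕ) (P : E → ℂ) : Prop where
  contDiff : ContDiff ℝ ∞ P
  map_smul_of_pos : ∀ r : ℝ, 0 < r → ∀ x, P (r • x) = (r : ℂ) ^ k * P x
  laplacian_eq_zero : Laplacian.laplacian P = 0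

namespace IsSolidHarmonic

variable {k : ℕ} {P : E → ℂ}

protected theorem continuous (hP : IsSolidHarmonic k P) : Continuous P :=
  hP.contDiff.continuous

protected theorem hasFDerivAt (hP : IsSolidHarmonic k P) (x : E) : HasFDerivAt P (fderiv ℝ P x) x :=
  (hP.contDiff.differentiable (by simp) x).hasFDerivAt

protected theorem dirDeriv (hP : IsSolidHarmonic (k + 1) P) (v : E) :
    IsSolidHarmonic k (dirDeriv v P) where
  contDiff := contDiff_dirDeriv hP.contDiff v
  map_smul_of_pos r hr x := by
    have hcomp : HasFDerivAt (fun y => P (r • y)) (r • fderiv ℝ P (r • x)) x := by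
      simpa [Function.comp_def] using
        (hP.hasFDerivAt (r • x)).comp x ((hasFDerivAt_id x).const_smul r)
    have hscale : HasFDerivAt (fun y => P (r • y)) ((r : ℂ) ^ (k + 1) • fderiv ℝ P x) x := by
      simp_rw [hP.map_smul_of_pos r hr]
      exact (hP.hasFDerivAt x).const_mul _
    have hderiv : r * fderiv ℝ P (r • x) v = r ^ (k + 1) * fderiv ℝ P x v := by
      simpa using congr($(hcomp.unique hscale) v)
    refine mul_left_cancel₀ (Complex.ofReal_ne_zero.2 hr.ne') (hderiv.trans ?_)
    rw [dirDeriv, pow_succ', mul_assoc]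
  laplacian_eq_zero := by
    rw [laplacian_dirDeriv hP.contDiff, hP.laplacian_eq_zero]
    ext x
    simp [dirDeriv]

theorem euler_identity (hP : IsSolidHarmonic k P) (x : E) :
    dirDeriv x P x = k * P x := by
  have hchain : HasDerivAt (fun r : ℝ => P (r • x)) (dirDeriv x P x) 1 := by
    have h : HasFDerivAt P (fderiv ℝ P x) ((1 : ℝ) • x) := by simpa using hP.hasFDerivAt x
    simpa [Function.comp_def, dirDeriv] using
      h.comp_hasDerivAt (1 : ℝ) ((hasDerivAt_id (1 : ℝ)).smul_const x)
  have hpow : HasDerivAt (fun r : ℝ => (r : ℂ) ^ k * P x) (k * P x) 1 := by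
    simpa using ((Complex.ofRealCLM.hasDerivAt (x := 1)).pow k).mul_const (P x)
  refine hchain.unique (hpow.congr_of_eventuallyEq ?_)
  filter_upwards [lt_mem_nhds zero_lt_one] with r hr using hP.map_smul_of_pos r hr x

theorem apply_eq_apply_zero (hP : IsSolidHarmonic 0 P) (x : E) : P x = P 0 := by
  have hline : Filter.Tendsto (fun r : ℝ => P (r • x)) (𝓝[>] 0) (𝓝 (P 0)) := by
    have := hP.continuous
    simpa using (Continuous.tendsto (f := fun r : ℝ => P (r • x)) (by fun_prop) 0).mono_left
      nhdsWithin_le_nhds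
  refine tendsto_nhds_unique (tendsto_const_nhds.congr' ?_) hline
  filter_upwards [self_mem_nhdsWithin] with r hr
  simpa using (hP.map_smul_of_pos r hr x).symm

theorem dirDeriv_eq_zero (hP : IsSolidHarmonic 0 P) (v : E) : dirDeriv v P = 0 := by
  have hconst : P = fun _ => P 0 := funext hP.apply_eq_apply_zero
  ext y
  rw [dirDeriv, hconst]
  simp

protected theorem map_neg (hP : IsSolidHarmonic k P) (x : E) : P (-x) = (-1) ^ k * P x := by
  induction k generalizing P with
  | zero => rw [hP.apply_eq_apply_zero (-x), hP.apply_eq_apply_zero x, pow_zero, one_mul]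
  | succ k ih =>
    have hneg : ((k + 1 : ℕ) : ℂ) * P (-x) = -dirDeriv x P (-x) := by
      rw [← hP.euler_identity, dirDeriv, map_neg, dirDeriv]
    rw [ih (hP.dirDeriv x), hP.euler_identity] at hneg
    refine mul_left_cancel₀ (Nat.cast_ne_zero.2 k.succ_ne_zero) (hneg.trans ?_)
    ring

theorem apply_zero (hP : IsSolidHarmonic k P) (hk : k ≠ 0) : P 0 = 0 := by
  have h := hP.euler_identity 0
  rw [dirDeriv, map_zero, zero_eq_mul] at h
  exact h.resolve_left (Nat.cast_ne_zero.2 hk)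

protected theorem map_smul (hP : IsSolidHarmonic k P) (r : ℝ) (x : E) :
    P (r • x) = (r : ℂ) ^ k * P x := by
  rcases lt_trichotomy r 0 with hr | rfl | hr
  · have := hP.map_smul_of_pos (-r) (neg_pos.2 hr) (-x)
    rw [hP.map_neg, ← mul_assoc, ← mul_pow] at this
    simpa using this
  · rcases eq_or_ne k 0 with rfl | hk
    · rw [zero_smul, pow_zero, one_mul, hP.apply_eq_apply_zero x]
    · rw [zero_smul, hP.apply_zero hk, Complex.ofReal_zero, zero_pow hk, zero_mul]
  · exact hP.map_smul_of_pos r hr x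

theorem exists_norm_le (hP : IsSolidHarmonic k P) :
    ∃ C : ℝ, ∀ x, ‖P x‖ ≤ C * (1 + ‖x‖) ^ k := by
  obtain ⟨C, hC⟩ := (isCompact_closedBall (0 : E) 1).exists_bound_of_continuousOn
    hP.continuous.continuousOn
  refine ⟨C, fun x => ?_⟩
  have hpos : 0 < 1 + ‖x‖ := by positivity
  have hmem : (1 + ‖x‖)⁻¹ • x ∈ Metric.closedBall (0 : E) 1 := by
    rw [mem_closedBall_zero_iff, norm_smul, norm_inv, Real.norm_of_nonneg hpos.le,
      inv_mul_le_iff₀ hpos]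
    linarith
  calc ‖P x‖ = (1 + ‖x‖) ^ k * ‖P ((1 + ‖x‖)⁻¹ • x)‖ := by
        rw [← smul_inv_smul₀ hpos.ne' x, hP.map_smul_of_pos _ hpos, smul_inv_smul₀ hpos.ne',
          norm_mul, norm_pow, Complex.norm_real, Real.norm_of_nonneg hpos.le]
    _ ≤ C * (1 + ‖x‖) ^ k := by
        rw [mul_comm]
        gcongr
        exact hC _ hmem

end IsSolidHarmonic

end SolidHarmonics

section StdGaussian

variable {E : Type*} [NormedAddCommGroup E] [InnerProductSpace ℝ E]

/-- The density of the standard Gaussian distribution with respect to Lebesgue measure, through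
which integration by parts and polar coordinates apply to `stdGaussian E`. -/
noncomputable def stdGaussianPDF (y : E) : ℝ :=
  (2 * Real.pi) ^ (-(Module.finrank ℝ E / 2 : ℝ)) * Real.exp (-‖y‖ ^ 2 / 2)

theorem stdGaussianPDF_pos (y : E) : 0 < stdGaussianPDF y := by
  unfold stdGaussianPDF
  positivity

@[fun_prop]
theorem continuous_stdGaussianPDF : Continuous (stdGaussianPDF (E := E)) := by
  unfold stdGaussianPDF
  fun_prop

theorem hasLineDerivAt_stdGaussianPDF (y v : E) :
    HasLineDerivAt ℝ stdGaussianPDF (-⟪v, y⟫ * stdGaussianPDF y) y v := by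
  unfold stdGaussianPDF
  have h := ((((hasStrictFDerivAt_norm_sq y).hasFDerivAt.neg).mul_const (2⁻¹ : ℝ)).exp.const_mul
    ((2 * Real.pi) ^ (-(Module.finrank ℝ E / 2 : ℝ)))).hasLineDerivAt v
  convert h using 1
  · simp [div_eq_mul_inv]
  · simp only [real_inner_comm, div_eq_mul_inv, neg_mul, Pi.neg_apply, smul_neg, neg_apply,
      smul_apply, coe_innerSL_apply, nsmul_eq_mul, Nat.cast_ofNat, smul_eq_mul, ne_eq,
      OfNat.ofNat_ne_zero, not_false_eq_true, inv_mul_cancel_left₀, neg_inj]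
    ring

variable [FiniteDimensional ℝ E] [MeasurableSpace E] [BorelSpace E]

theorem measurePreserving_inner_stdGaussian {u : E} (hu : ‖u‖ = 1) :
    MeasurePreserving (fun y => ⟪u, y⟫) (stdGaussian E) (gaussianReal 0 1) where
  measurable := by fun_prop
  map_eq := by
    have := IsGaussian.map_eq_gaussianReal (μ := stdGaussian E) (innerSL ℝ u)
    rw [integral_strongDual_stdGaussian, variance_dual_stdGaussian, innerSL_apply_norm, hu] at this
    simpa using this

theorem integral_comp_inner_stdGaussian {F : Type*} [NormedAddCommGroup F] [NormedSpace ℝ F]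
    {u : E} (hu : ‖u‖ = 1) {f : ℝ → F} (hf : AEStronglyMeasurable f (gaussianReal 0 1)) :
    ∫ y, f ⟪u, y⟫ ∂(stdGaussian E) = ∫ t, f t ∂(gaussianReal 0 1) := by
  have hmap := measurePreserving_inner_stdGaussian hu
  rw [← hmap.map_eq] at hf ⊢
  exact (integral_map hmap.aemeasurable hf).symm

theorem integrable_stdGaussianPDF : Integrable (stdGaussianPDF (E := E)) := by
  have hcexp := GaussianFourier.integrable_cexp_neg_mul_sq_norm_add (V := E) (b := 1 / 2) (by simp)
    0 0
  refine (hcexp.norm.const_mul ((2 * Real.pi) ^ (-(Module.finrank ℝ E / 2 : ℝ)))).congr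
    (.of_forall fun y => ?_)
  have hexp : -‖y‖ ^ 2 / 2 = -(2⁻¹ * ‖y‖ ^ 2) := by ring
  simp [stdGaussianPDF, Complex.norm_exp, ← Complex.ofReal_pow, hexp]

theorem stdGaussian_eq_withDensity :
    stdGaussian E = volume.withDensity fun y => ENNReal.ofReal (stdGaussianPDF y) := by
  have := isFiniteMeasure_withDensity_ofReal (integrable_stdGaussianPDF (E := E)).hasFiniteIntegral
  refine Measure.ext_of_charFun (funext fun t => ?_)
  have hpi : (Real.pi / (1 / 2) : ℂ) ^ (Module.finrank ℝ E / 2 : ℂ) =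
      ((2 * Real.pi) ^ (Module.finrank ℝ E / 2 : ℝ) : ℝ) := by
    rw [Complex.ofReal_cpow (by positivity)]
    push_cast
    ring_nf
  have hpi_ne : ((2 * Real.pi) ^ (Module.finrank ℝ E / 2 : ℝ) : ℝ) ≠ 0 := by positivity
  have hfourier := GaussianFourier.integral_cexp_neg_mul_sq_norm_add (b := 1 / 2) (by simp)
    Complex.I t
  rw [hpi] at hfourier
  rw [charFun_stdGaussian, charFun_apply, integral_withDensity_eq_integral_toReal_smul (by fun_prop)
    (.of_forall fun _ => ENNReal.ofReal_lt_top)]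
  calc Complex.exp (-‖t‖ ^ 2 / 2)
      = ((2 * Real.pi) ^ (-(Module.finrank ℝ E / 2 : ℝ)) : ℝ) *
          ∫ y : E, Complex.exp (-(1 / 2) * ‖y‖ ^ 2 + Complex.I * ⟪t, y⟫) := by
        rw [hfourier, ← mul_assoc, ← Complex.ofReal_mul, Real.rpow_neg (by positivity),
          inv_mul_cancel₀ hpi_ne, Complex.I_sq]
        norm_num
    _ = ∫ y, (ENNReal.ofReal (stdGaussianPDF y)).toReal • Complex.exp (⟪y, t⟫ * Complex.I) := by
        rw [← integral_const_mul]
        refine integral_congr_ae (.of_forall fun y => ?_)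
        simp only [ENNReal.toReal_ofReal (stdGaussianPDF_pos _).le]
        simp only [stdGaussianPDF, Complex.real_smul, Complex.exp_add, real_inner_comm]
        push_cast
        ring_nf

theorem integral_stdGaussian {F : Type*} [NormedAddCommGroup F] [NormedSpace ℝ F] (f : E → F) :
    ∫ y, f y ∂(stdGaussian E) = ∫ y, stdGaussianPDF y • f y := by
  rw [stdGaussian_eq_withDensity, integral_withDensity_eq_integral_toReal_smul (by fun_prop)
    (.of_forall fun _ => ENNReal.ofReal_lt_top)]
  simp only [ENNReal.toReal_ofReal (stdGaussianPDF_pos _).le]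

theorem integrable_stdGaussian_iff {F : Type*} [NormedAddCommGroup F] [NormedSpace ℝ F]
    {f : E → F} : Integrable f (stdGaussian E) ↔ Integrable fun y => stdGaussianPDF y • f y := by
  rw [stdGaussian_eq_withDensity, integrable_withDensity_iff_integrable_smul' (by fun_prop)
    (.of_forall fun _ => ENNReal.ofReal_lt_top)]
  simp only [ENNReal.toReal_ofReal (stdGaussianPDF_pos _).le]

theorem integral_inner_smul_stdGaussian {F : Type*} [NormedAddCommGroup F] [NormedSpace ℝ F]
    {f f' : E → F} {v : E} (hderiv : ∀ y, HasLineDerivAt ℝ f (f' y) y v)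
    (hf : Integrable f (stdGaussian E)) (hf' : Integrable f' (stdGaussian E))
    (hinner : Integrable (fun y => ⟪v, y⟫ • f y) (stdGaussian E)) :
    ∫ y, ⟪v, y⟫ • f y ∂(stdGaussian E) = ∫ y, f' y ∂(stdGaussian E) := by
  rw [integrable_stdGaussian_iff] at hf hf' hinner
  have hsmul (y : E) : (-⟪v, y⟫ * stdGaussianPDF y) • f y =
      -(stdGaussianPDF y • ⟪v, y⟫ • f y) := by
    rw [neg_mul, neg_smul, mul_comm, mul_smul]
  have hparts := integral_bilinear_hasLineDerivAt_right_eq_neg_left_of_integrable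
    (B := ContinuousLinearMap.lsmul ℝ ℝ) (μ := volume) (f := stdGaussianPDF)
    (hinner.neg.congr (.of_forall fun y => (hsmul y).symm)) hf' hf
    (fun y _ => hasLineDerivAt_stdGaussianPDF y v) (fun y _ => hderiv y)
  simp only [ContinuousLinearMap.lsmul_apply, hsmul, integral_neg, neg_neg] at hparts
  rw [integral_stdGaussian, integral_stdGaussian, hparts]

theorem indepFun_inner_orthogonalComponent_stdGaussian {u : E} (hu : ‖u‖ = 1) :
    IndepFun (fun y => ⟪u, y⟫) (fun y => y - ⟪u, y⟫ • u) (stdGaussian E) := by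
  have hpair : HasGaussianLaw (fun y : E => (⟪u, y⟫, y - ⟪u, y⟫ • u)) (stdGaussian E) :=
    IsGaussian.hasGaussianLaw_id.map_fun ((innerSL ℝ u).prod
      (ContinuousLinearMap.id ℝ E - (innerSL ℝ u).smulRight u))
  refine hpair.indepFun_of_covariance_inner fun s w => ?_
  have hproj (y : E) : ⟪w, y - ⟪u, y⟫ • u⟫ = ⟪w - ⟪u, w⟫ • u, y⟫ := by
    simp only [inner_sub_left, inner_sub_right, real_inner_smul_right, real_inner_comm]
    ring
  have hscalar (y : E) : ⟪s, ⟪u, y⟫⟫ = ⟪s • u, y⟫ := by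
    simp [real_inner_smul_left, mul_comm]
  simp only [hproj, hscalar]
  rw [← covarianceBilin_apply_eq_cov IsGaussian.memLp_two_id, covarianceBilin_stdGaussian]
  change ⟪s • u, w - ⟪u, w⟫ • u⟫ = 0
  rw [real_inner_smul_left, inner_sub_right, real_inner_smul_right, real_inner_self_eq_norm_sq, hu]
  ring

end StdGaussian

section GaussianMoments

/-- Functions all of whose polynomial moments against the standard Gaussian law converge: the
functions of `⟪u, y⟫` for which the Gaussian Funk–Hecke formula is proved. -/
def HasGaussianMoments (f : ℝ → ℂ) : Prop :=
  ∀ m : ℕ, Integrable (fun t : ℝ => (t : ℂ) ^ m * f t) (gaussianReal 0 1)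

theorem HasGaussianMoments.mul_id {f : ℝ → ℂ} (hf : HasGaussianMoments f) :
    HasGaussianMoments fun t => t * f t := fun m => by
  simpa only [pow_succ, mul_assoc] using hf (m + 1)

theorem HasGaussianMoments.integrable {f : ℝ → ℂ} (hf : HasGaussianMoments f) :
    Integrable f (gaussianReal 0 1) := by
  simpa only [pow_zero, one_mul] using hf 0

variable {E : Type*} [NormedAddCommGroup E] [InnerProductSpace ℝ E] [FiniteDimensional ℝ E]
  [MeasurableSpace E] [BorelSpace E]

theorem HasGaussianMoments.integrable_comp_inner {f : ℝ → ℂ} (hf : HasGaussianMoments f)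
    {u : E} (hu : ‖u‖ = 1) : Integrable (fun y => f ⟪u, y⟫) (stdGaussian E) :=
  (measurePreserving_inner_stdGaussian hu).integrable_comp_of_integrable hf.integrable

theorem HasGaussianMoments.integrable_comp_inner_mul_orthogonalComponent {f : ℝ → ℂ}
    (hf : HasGaussianMoments f) {u : E} (hu : ‖u‖ = 1) (m : ℕ) :
    Integrable (fun y => ‖f ⟪u, y⟫‖ * (1 + ‖y - ⟪u, y⟫ • u‖) ^ m) (stdGaussian E) := by
  have hLp : MemLp (fun y => 1 + ‖y - ⟪u, y⟫ • u‖) m (stdGaussian E) := by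
    have hz : MemLp (fun y => y - ⟪u, y⟫ • u) m (stdGaussian E) :=
      (IsGaussian.memLp_id (stdGaussian E) m (by simp)).continuousLinearMap_comp
        (ContinuousLinearMap.id ℝ E - (innerSL ℝ u).smulRight u)
    exact (memLp_const (1 : ℝ)).add hz.norm
  have hpow := hLp.integrable_norm_pow'
  simp_rw [Real.norm_of_nonneg (add_nonneg zero_le_one (norm_nonneg _))] at hpow
  refine IndepFun.integrable_mul ?_ (hf.integrable_comp_inner hu).norm hpow
  refine (indepFun_inner_orthogonalComponent_stdGaussian hu).comp₀ (φ := fun t => ‖f t‖)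
    (ψ := fun z => (1 + ‖z‖) ^ m) (by fun_prop) (by fun_prop) ?_ (by fun_prop)
  rw [(measurePreserving_inner_stdGaussian hu).map_eq]
  exact hf.integrable.aestronglyMeasurable.norm.aemeasurable

theorem HasGaussianMoments.integrable_comp_inner_mul {f : ℝ → ℂ} (hf : HasGaussianMoments f)
    {u : E} (hu : ‖u‖ = 1) {Q : E → ℂ} (hQ : Continuous Q) {C : ℝ} {m : ℕ}
    (hC : ∀ y, ‖Q y‖ ≤ C * (1 + ‖y‖) ^ m) :
    Integrable (fun y => f ⟪u, y⟫ * Q y) (stdGaussian E) := by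
  have hparallel : Integrable (fun y => ‖f ⟪u, y⟫‖ * |⟪u, y⟫| ^ m) (stdGaussian E) := by
    have := ((measurePreserving_inner_stdGaussian hu).integrable_comp_of_integrable (hf m)).norm
    simpa [Function.comp_def, mul_comm] using this
  have horthogonal := hf.integrable_comp_inner_mul_orthogonalComponent hu m
  refine ((hparallel.add horthogonal).const_mul (C * 2 ^ (m - 1))).mono'
    ((hf.integrable_comp_inner hu).aestronglyMeasurable.mul hQ.aestronglyMeasurable)
    (.of_forall fun y => ?_)
  have hC0 : 0 ≤ C := by simpa using (norm_nonneg _).trans (hC 0)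
  have hy : 1 + ‖y‖ ≤ |⟪u, y⟫| + (1 + ‖y - ⟪u, y⟫ • u‖) := by
    have := norm_le_norm_add_norm_sub' y (⟪u, y⟫ • u)
    rw [norm_smul, hu, mul_one, Real.norm_eq_abs] at this
    linarith
  calc ‖f ⟪u, y⟫ * Q y‖ ≤ ‖f ⟪u, y⟫‖ * (C * (|⟪u, y⟫| + (1 + ‖y - ⟪u, y⟫ • u‖)) ^ m) := by
        rw [norm_mul]
        gcongr
        exact (hC y).trans (mul_le_mul_of_nonneg_left (pow_le_pow_left₀ (by positivity) hy m) hC0)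
    _ ≤ ‖f ⟪u, y⟫‖ * (C * (2 ^ (m - 1) * (|⟪u, y⟫| ^ m + (1 + ‖y - ⟪u, y⟫ • u‖) ^ m))) := by
        gcongr
        exact add_pow_le (by positivity) (by positivity) m
    _ = C * 2 ^ (m - 1) * (‖f ⟪u, y⟫‖ * |⟪u, y⟫| ^ m +
          ‖f ⟪u, y⟫‖ * (1 + ‖y - ⟪u, y⟫ • u‖) ^ m) := by ring

end GaussianMoments

section Hermite

open Polynomial

theorem derivative_hermite_succ (k : ℕ) :
    derivative (hermite (k + 1)) = ((k + 1 : ℕ) : ℤ[X]) * hermite k := by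
  induction k with
  | zero => simp
  | succ k ih =>
    rw [hermite_succ (k + 1), derivative_sub, derivative_mul, derivative_X, ih, derivative_mul,
      derivative_natCast, hermite_succ k]
    push_cast
    ring

theorem hermite_add_two (k : ℕ) :
    hermite (k + 2) = X * hermite (k + 1) - ((k + 1 : ℕ) : ℤ[X]) * hermite k := by
  rw [hermite_succ (k + 1), derivative_hermite_succ]

theorem HasGaussianMoments.integrable_mul_aeval {f : ℝ → ℂ} (hf : HasGaussianMoments f)
    (p : ℤ[X]) : Integrable (fun t : ℝ => f t * aeval (t : ℂ) p) (gaussianReal 0 1) := by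
  simp only [aeval_eq_sum_range, Finset.mul_sum]
  refine integrable_finsetSum _ fun m _ => ?_
  refine ((hf m).smul (p.coeff m)).congr (.of_forall fun t => ?_)
  simp only [Pi.smul_apply, zsmul_eq_mul]
  ring

theorem HasGaussianMoments.integral_mul_hermite_add_two {f : ℝ → ℂ} (hf : HasGaussianMoments f)
    (k : ℕ) :
    ∫ t : ℝ, f t * aeval (t : ℂ) (hermite (k + 2)) ∂(gaussianReal 0 1) =
      (∫ t : ℝ, t * f t * aeval (t : ℂ) (hermite (k + 1)) ∂(gaussianReal 0 1)) -
        (k + 1) * ∫ t : ℝ, f t * aeval (t : ℂ) (hermite k) ∂(gaussianReal 0 1) := by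
  rw [← integral_const_mul, ← integral_sub (hf.mul_id.integrable_mul_aeval _)
    ((hf.integrable_mul_aeval _).const_mul _)]
  congr! 2 with t
  simp only [hermite_add_two, map_sub, map_mul, aeval_X, map_natCast]
  push_cast
  ring

end Hermite

section FunkHecke

open Polynomial

variable {E : Type*} [NormedAddCommGroup E] [InnerProductSpace ℝ E] [FiniteDimensional ℝ E]
  {k : ℕ} {P : E → ℂ}

theorem IsSolidHarmonic.sum_inner_mul_dirDeriv {ι : Type*} [Fintype ι] (hP : IsSolidHarmonic k P)
    (b : OrthonormalBasis ι ℝ E) (y : E) :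
    ∑ i, (⟪b i, y⟫ : ℂ) * dirDeriv (b i) P y = k * P y := by
  rw [← hP.euler_identity]
  conv_rhs => rw [dirDeriv, ← b.sum_repr' y, map_sum]
  simp [dirDeriv, b.sum_repr' y]

variable [MeasurableSpace E] [BorelSpace E] {f : ℝ → ℂ} {u : E}

theorem IsSolidHarmonic.integrable_comp_inner_mul (hP : IsSolidHarmonic k P)
    (hf : HasGaussianMoments f) (hu : ‖u‖ = 1) :
    Integrable (fun y => f ⟪u, y⟫ * P y) (stdGaussian E) := by
  obtain ⟨C, hC⟩ := hP.exists_norm_le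
  exact hf.integrable_comp_inner_mul hu hP.continuous hC

theorem IsSolidHarmonic.integrable_comp_inner_mul_inner_mul (hP : IsSolidHarmonic k P)
    (hf : HasGaussianMoments f) (hu : ‖u‖ = 1) (v : E) :
    Integrable (fun y => f ⟪u, y⟫ * (⟪v, y⟫ * P y)) (stdGaussian E) := by
  obtain ⟨C, hC⟩ := hP.exists_norm_le
  have hcont := hP.continuous
  refine hf.integrable_comp_inner_mul hu (by fun_prop) (C := ‖v‖ * C) (m := k + 1) fun y => ?_
  calc ‖(⟪v, y⟫ : ℂ) * P y‖ ≤ (‖v‖ * (1 + ‖y‖)) * (C * (1 + ‖y‖) ^ k) := by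
        rw [norm_mul, Complex.norm_real]
        gcongr
        · exact (norm_inner_le_norm v y).trans (by gcongr; linarith)
        · exact hC y
    _ = ‖v‖ * C * (1 + ‖y‖) ^ (k + 1) := by ring

theorem IsSolidHarmonic.integrable_comp_inner_mul_dirDeriv (hP : IsSolidHarmonic k P)
    (hf : HasGaussianMoments f) (hu : ‖u‖ = 1) (v : E) :
    Integrable (fun y => f ⟪u, y⟫ * dirDeriv v P y) (stdGaussian E) := by
  cases k with
  | zero => simp [hP.dirDeriv_eq_zero v]
  | succ k => exact (hP.dirDeriv v).integrable_comp_inner_mul hf hu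

theorem IsSolidHarmonic.integral_comp_inner_mul_inner_mul (hP : IsSolidHarmonic k P)
    (hf : HasGaussianMoments f) (hu : ‖u‖ = 1) {v : E} (huv : ⟪u, v⟫ = 0) :
    ∫ y, f ⟪u, y⟫ * (⟪v, y⟫ * P y) ∂(stdGaussian E) =
      ∫ y, f ⟪u, y⟫ * dirDeriv v P y ∂(stdGaussian E) := by
  have hsmul (y : E) : f ⟪u, y⟫ * (⟪v, y⟫ * P y) = ⟪v, y⟫ • (f ⟪u, y⟫ * P y) := by
    rw [Complex.real_smul]
    ring
  have hderiv (y : E) :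
      HasLineDerivAt ℝ (fun y => f ⟪u, y⟫ * P y) (f ⟪u, y⟫ * dirDeriv v P y) y v := by
    have h := ((hP.hasFDerivAt y).hasLineDerivAt v).const_mul (f ⟪u, y⟫)
    simpa [HasLineDerivAt, dirDeriv, inner_add_right, real_inner_smul_right, huv] using h
  have hinner := hP.integrable_comp_inner_mul_inner_mul hf hu v
  simp only [hsmul] at hinner ⊢
  exact integral_inner_smul_stdGaussian hderiv (hP.integrable_comp_inner_mul hf hu)
    (hP.integrable_comp_inner_mul_dirDeriv hf hu v) hinner

theorem IsSolidHarmonic.succ_mul_integral_comp_inner_mul (hP : IsSolidHarmonic (k + 1) P)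
    (hf : HasGaussianMoments f) (hu : ‖u‖ = 1) :
    (k + 1) * ∫ y, f ⟪u, y⟫ * P y ∂(stdGaussian E) =
      ∫ y, ⟪u, y⟫ * f ⟪u, y⟫ * dirDeriv u P y ∂(stdGaussian E) -
        ∫ y, f ⟪u, y⟫ * dirDeriv u (dirDeriv u P) y ∂(stdGaussian E) := by
  classical
  have hu_orthonormal : Orthonormal ℝ ((↑) : ({u} : Set E) → E) := by simpa
  obtain ⟨s, b, hus, hb⟩ := hu_orthonormal.exists_orthonormalBasis_extension
  let i₀ : s := ⟨u, hus rfl⟩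
  have hi₀ : b i₀ = u := congrFun hb i₀
  have hortho (i : s) (hi : i ≠ i₀) : ⟪u, b i⟫ = 0 := hi₀ ▸ b.orthonormal.2 hi.symm
  have hlap (y : E) : ∑ i, dirDeriv (b i) (dirDeriv (b i) P) y = 0 := by
    rw [← laplacian_eq_sum_dirDeriv hP.contDiff b, hP.laplacian_eq_zero, Pi.zero_apply]
  calc (k + 1) * ∫ y, f ⟪u, y⟫ * P y ∂(stdGaussian E)
      = ∫ y, ∑ i, f ⟪u, y⟫ * (⟪b i, y⟫ * dirDeriv (b i) P y) ∂(stdGaussian E) := by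
        rw [← integral_const_mul]
        congr! 2
        rw [← Finset.mul_sum, hP.sum_inner_mul_dirDeriv b]
        push_cast
        ring
    _ = ∑ i, ∫ y, f ⟪u, y⟫ * (⟪b i, y⟫ * dirDeriv (b i) P y) ∂(stdGaussian E) :=
        integral_finsetSum _ fun i _ =>
          (hP.dirDeriv (b i)).integrable_comp_inner_mul_inner_mul hf hu (b i)
    _ = (∫ y, f ⟪u, y⟫ * (⟪u, y⟫ * dirDeriv u P y) ∂(stdGaussian E)) +
          ∑ i ∈ {i₀}ᶜ, ∫ y, f ⟪u, y⟫ * dirDeriv (b i) (dirDeriv (b i) P) y ∂(stdGaussian E) := by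
        rw [Fintype.sum_eq_add_sum_compl i₀, hi₀]
        congr 1
        exact Finset.sum_congr rfl fun i hi =>
          (hP.dirDeriv (b i)).integral_comp_inner_mul_inner_mul hf hu (hortho i (by simpa using hi))
    _ = _ := by
        rw [← integral_finsetSum _ fun i _ =>
          (hP.dirDeriv (b i)).integrable_comp_inner_mul_dirDeriv hf hu (b i),
          sub_eq_add_neg, ← integral_neg]
        congr! 3 with _ y
        · ring
        · have := hlap y
          rw [Fintype.sum_eq_add_sum_compl i₀, hi₀] at this
          rw [← Finset.mul_sum, eq_neg_of_add_eq_zero_right this, mul_neg]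

theorem IsSolidHarmonic.integral_comp_inner_mul (hP : IsSolidHarmonic k P)
    (hf : HasGaussianMoments f) (hu : ‖u‖ = 1) :
    ∫ y, f ⟪u, y⟫ * P y ∂(stdGaussian E) =
      P u * ∫ t : ℝ, f t * aeval (t : ℂ) (hermite k) ∂(gaussianReal 0 1) := by
  induction k using Nat.twoStepInduction generalizing P f with
  | zero =>
    have hconst (y : E) : P y = P u := by rw [hP.apply_eq_apply_zero y, hP.apply_eq_apply_zero u]
    simp only [hconst, hermite_zero, map_one, mul_one, integral_mul_const]
    rw [integral_comp_inner_stdGaussian hu hf.integrable.aestronglyMeasurable, mul_comm]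
  | one =>
    have hconst (y : E) : dirDeriv u P y = P u := by
      rw [(hP.dirDeriv u).apply_eq_apply_zero y, ← (hP.dirDeriv u).apply_eq_apply_zero u,
        hP.euler_identity, Nat.cast_one, one_mul]
    have hrec := IsSolidHarmonic.succ_mul_integral_comp_inner_mul (k := 0) hP hf hu
    simp only [(hP.dirDeriv u).dirDeriv_eq_zero, hconst, Pi.zero_apply, mul_zero, integral_zero,
      sub_zero, Nat.cast_zero, zero_add, one_mul, integral_mul_const] at hrec
    rw [hrec, integral_comp_inner_stdGaussian (f := fun t => t * f t) hu
      hf.mul_id.integrable.aestronglyMeasurable, hermite_one]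
    simp only [aeval_X, mul_comm]
  | more k ih ih' =>
    refine mul_left_cancel₀ (show ((k + 1 : ℕ) + 1 : ℂ) ≠ 0 from Nat.cast_add_one_ne_zero _) ?_
    rw [hP.succ_mul_integral_comp_inner_mul hf hu, ih' (hP.dirDeriv u) hf.mul_id,
      ih ((hP.dirDeriv u).dirDeriv u) hf, (hP.dirDeriv u).euler_identity, hP.euler_identity,
      hf.integral_mul_hermite_add_two]
    push_cast
    ring

end FunkHecke

section PolarCoordinates

theorem integral_volumeIoiPow {F : Type*} [NormedAddCommGroup F] [NormedSpace ℝ F] (m : ℕ)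
    (g : ℝ → F) :
    ∫ r : Set.Ioi (0 : ℝ), g r ∂(Measure.volumeIoiPow m) = ∫ r in Set.Ioi 0, r ^ m • g r := by
  simp only [Measure.volumeIoiPow, ENNReal.ofReal]
  rw [integral_withDensity_eq_integral_smul
      (measurable_subtype_coe.pow_const _).real_toNNReal,
    integral_subtype_comap measurableSet_Ioi fun r : ℝ => Real.toNNReal (r ^ m) • g r]
  refine setIntegral_congr_fun measurableSet_Ioi fun r hr => ?_
  rw [NNReal.smul_def, Real.coe_toNNReal _ (pow_nonneg (le_of_lt hr) _)]

theorem integral_cpow_mul_exp_neg_sq_div_two_Ioi {s : ℂ} (hs : 0 < s.re) :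
    ∫ r : ℝ in Set.Ioi 0, (r : ℂ) ^ (s - 1) * (Real.exp (-r ^ 2 / 2) : ℂ) =
      2 ^ (s / 2 - 1) * Complex.Gamma (s / 2) := by
  have hsubst := mellin_comp_rpow (fun t : ℝ => (Real.exp (-t / 2) : ℂ)) s 2
  simp only [mellin, smul_eq_mul, Real.rpow_two, Complex.ofReal_ofNat] at hsubst
  have hexp (t : ℝ) : (Real.exp (-t / 2) : ℂ) = Complex.exp (-((1 / 2 : ℝ) * t)) := by
    push_cast
    ring_nf
  simp_rw [hsubst, hexp]
  rw [Complex.integral_cpow_mul_exp_neg_mul_Ioi (by simpa using hs) (by norm_num),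
    Complex.cpow_sub _ _ two_ne_zero, Complex.cpow_one]
  simp only [Nat.abs_ofNat, one_div, Complex.ofReal_inv, Complex.ofReal_ofNat, div_inv_eq_mul,
    one_mul, Complex.real_smul]
  ring

variable {E : Type*} [NormedAddCommGroup E]

section NormedSpace

variable [NormedSpace ℝ E] [FiniteDimensional ℝ E] [Nontrivial E] [MeasurableSpace E]
  [BorelSpace E]

theorem integral_homogeneous_mul_comp_norm (μ : Measure E) [μ.IsAddHaarMeasure] {F : E → ℂ} {β : ℂ}
    (hF : ∀ r : ℝ, 0 < r → ∀ y, F (r • y) = (r : ℂ) ^ β * F y) (g : ℝ → ℂ) :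
    ∫ y, F y * g ‖y‖ ∂μ = (∫ ω : Metric.sphere (0 : E) 1, F ω ∂μ.toSphere) *
      ∫ r : ℝ in Set.Ioi 0, (r : ℂ) ^ (β + Module.finrank ℝ E - 1) * g r := by
  calc ∫ y, F y * g ‖y‖ ∂μ
      = ∫ y : ({0}ᶜ : Set E), F y * g ‖y.1‖ ∂(μ.comap Subtype.val) := by
        rw [integral_subtype_comap (measurableSet_singleton _).compl fun y => F y * g ‖y‖,
          restrict_compl_singleton]
    _ = ∫ q : Metric.sphere (0 : E) 1 × Set.Ioi (0 : ℝ), F q.1 * (((q.2 : ℝ) : ℂ) ^ β * g q.2)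
          ∂(μ.toSphere.prod (.volumeIoiPow (Module.finrank ℝ E - 1))) := by
        rw [← μ.measurePreserving_homeomorphUnitSphereProd.integral_comp
          (Homeomorph.measurableEmbedding _)]
        congr! 2 with y
        have hy : 0 < ‖y.1‖ := norm_pos_iff.2 y.2
        rw [homeomorphUnitSphereProd_apply_fst_coe, homeomorphUnitSphereProd_apply_snd_coe,
          mul_left_comm, ← mul_assoc, ← hF _ hy, smul_inv_smul₀ hy.ne']
    _ = (∫ ω : Metric.sphere (0 : E) 1, F ω ∂μ.toSphere) *
          ∫ r : Set.Ioi (0 : ℝ), ((r : ℝ) : ℂ) ^ β * g r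
            ∂(Measure.volumeIoiPow (Module.finrank ℝ E - 1)) :=
        integral_prod_mul (fun ω : Metric.sphere (0 : E) 1 => F ω)
          fun r : Set.Ioi (0 : ℝ) => ((r : ℝ) : ℂ) ^ β * g r
    _ = _ := by
        rw [integral_volumeIoiPow _ fun r : ℝ => (r : ℂ) ^ β * g r]
        congr 1
        refine setIntegral_congr_fun measurableSet_Ioi fun r hr => ?_
        have hr : (r : ℂ) ≠ 0 := Complex.ofReal_ne_zero.2 (ne_of_gt hr)
        have hdim : ((Module.finrank ℝ E - 1 : ℕ) : ℂ) = Module.finrank ℝ E - 1 := by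
          rw [Nat.cast_pred Module.finrank_pos]
        rw [add_sub_assoc, ← hdim, Complex.cpow_add _ _ hr, Complex.cpow_natCast, Complex.real_smul,
          Complex.ofReal_pow]
        ring

end NormedSpace

variable [InnerProductSpace ℝ E] [FiniteDimensional ℝ E] [Nontrivial E] [MeasurableSpace E]
  [BorelSpace E]

theorem integral_homogeneous_stdGaussian_eq_toSphere {F : E → ℂ} {β : ℂ}
    (hF : ∀ r : ℝ, 0 < r → ∀ y, F (r • y) = (r : ℂ) ^ β * F y)
    (hβ : 0 < (β + Module.finrank ℝ E).re) :
    ∫ y, F y ∂(stdGaussian E) =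
      ((2 * Real.pi) ^ (-(Module.finrank ℝ E / 2 : ℝ)) : ℝ) *
        2 ^ ((β + Module.finrank ℝ E) / 2 - 1) * Complex.Gamma ((β + Module.finrank ℝ E) / 2) *
          ∫ ω : Metric.sphere (0 : E) 1, F ω ∂(volume : Measure E).toSphere := by
  have hpolar := integral_homogeneous_mul_comp_norm volume hF fun r => (Real.exp (-r ^ 2 / 2) : ℂ)
  rw [integral_cpow_mul_exp_neg_sq_div_two_Ioi hβ] at hpolar
  rw [integral_stdGaussian, mul_assoc, mul_assoc, ← mul_assoc (2 ^ _), mul_comm (2 ^ _ * _),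
    ← hpolar, ← integral_const_mul]
  congr! 2
  rw [stdGaussianPDF, Complex.real_smul]
  push_cast
  ring

theorem integral_homogeneous_stdGaussian {F : E → ℂ} {β : ℂ}
    (hF : ∀ r : ℝ, 0 < r → ∀ y, F (r • y) = (r : ℂ) ^ β * F y)
    (hβ : 0 < (β + Module.finrank ℝ E).re) :
    ∫ y, F y ∂(stdGaussian E) =
      2 ^ (β / 2) * Complex.Gamma ((β + Module.finrank ℝ E) / 2) /
        Complex.Gamma (Module.finrank ℝ E / 2) *
          ⨍ ω : Metric.sphere (0 : E) 1, F ω ∂(volume : Measure E).toSphere := by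
  have hmass := integral_homogeneous_stdGaussian_eq_toSphere (E := E) (F := fun _ => 1) (β := 0)
    (by simp) (by simpa using Module.finrank_pos)
  simp only [integral_const, probReal_univ, one_smul, zero_add, Complex.real_smul, mul_one] at hmass
  rw [integral_homogeneous_stdGaussian_eq_toSphere hF hβ, average_eq, Complex.real_smul,
    Complex.ofReal_inv]
  have h2 : (2 : ℂ) ^ ((β + Module.finrank ℝ E) / 2 - 1) =
      2 ^ (β / 2) * 2 ^ ((Module.finrank ℝ E : ℂ) / 2 - 1) := by
    rw [← Complex.cpow_add _ _ two_ne_zero]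
    ring_nf
  have hnorm : ((2 * Real.pi) ^ (-(Module.finrank ℝ E / 2 : ℝ)) : ℝ) *
      2 ^ ((Module.finrank ℝ E : ℂ) / 2 - 1) = (Complex.Gamma (Module.finrank ℝ E / 2) *
        (volume : Measure E).toSphere.real Set.univ)⁻¹ :=
    eq_inv_of_mul_eq_one_left (by rw [← mul_assoc, ← hmass])
  rw [h2]
  linear_combination (2 ^ (β / 2) * Complex.Gamma ((β + Module.finrank ℝ E) / 2) *
    ∫ ω : Metric.sphere (0 : E) 1, F ω ∂(volume : Measure E).toSphere) * hnorm

end PolarCoordinates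

section AbsPow

open Polynomial

/-- The function `t ↦ |t| ^ α * t ^ k`. If `P` is homogeneous of degree `k`, then
`|p| ^ α * P (p • ω) = absPow α k p * P ω`. -/
noncomputable def absPow (α : ℂ) (k : ℕ) (t : ℝ) : ℂ :=
  ((|t| : ℝ) : ℂ) ^ α * (t : ℂ) ^ k

theorem mul_absPow (α : ℂ) (k : ℕ) (t : ℝ) : t * absPow α k t = absPow α (k + 1) t := by
  rw [absPow, absPow]
  ring

theorem absPow_mul (α : ℂ) (k : ℕ) (r t : ℝ) :
    absPow α k (r * t) = absPow α k r * absPow α k t := by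
  simp only [absPow, abs_mul, Complex.ofReal_mul, mul_pow,
    Complex.mul_cpow_ofReal_nonneg (abs_nonneg r) (abs_nonneg t)]
  ring

theorem absPow_of_pos (α : ℂ) (k : ℕ) {r : ℝ} (hr : 0 < r) :
    absPow α k r = (r : ℂ) ^ (α + k) := by
  rw [absPow, abs_of_pos hr, Complex.cpow_add _ _ (Complex.ofReal_ne_zero.2 hr.ne'),
    Complex.cpow_natCast]

theorem absPow_add_two_ae_eq (α : ℂ) (k : ℕ) :
    absPow α (k + 2) =ᵐ[gaussianReal 0 1] absPow (α + 2) k := by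
  have := nullSingletonClass_gaussianReal (μ := 0) (v := 1) one_ne_zero
  filter_upwards [Measure.ae_ne (gaussianReal 0 1) 0] with t ht
  have hsq : ((|t| : ℝ) : ℂ) ^ 2 = (t : ℂ) ^ 2 := by exact_mod_cast sq_abs t
  rw [absPow, absPow, Complex.cpow_add _ _ (by simpa using ht), Complex.cpow_ofNat, hsq]
  ring

theorem norm_absPow_le (α : ℂ) (k : ℕ) (t : ℝ) : ‖absPow α k t‖ ≤ |t| ^ (α.re + k) := by
  rcases eq_or_ne t 0 with rfl | ht
  · rcases eq_or_ne α 0 with rfl | hα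
    · rcases eq_or_ne k 0 with rfl | hk <;> simp [absPow, *]
    · rw [absPow, abs_zero, Complex.ofReal_zero, Complex.zero_cpow hα, zero_mul, norm_zero]
      positivity
  · have h := abs_pos.2 ht
    rw [absPow, norm_mul, norm_pow, Complex.norm_real, Real.norm_eq_abs,
      Complex.norm_cpow_eq_rpow_re_of_pos h, Real.rpow_add h, Real.rpow_natCast]

theorem integrable_norm_rpow_stdGaussian {E : Type*} [NormedAddCommGroup E] [InnerProductSpace ℝ E]
    [FiniteDimensional ℝ E] [Nontrivial E] [MeasurableSpace E] [BorelSpace E] {s : ℝ}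
    (hs : -(Module.finrank ℝ E : ℝ) < s) : Integrable (fun y => ‖y‖ ^ s) (stdGaussian E) := by
  have hradial : IntegrableOn (fun r : ℝ => r ^ (s + Module.finrank ℝ E - 1) *
      Real.exp (-(1 / 2) * r ^ 2)) (Set.Ioi 0) :=
    integrableOn_rpow_mul_exp_neg_mul_sq (by norm_num) (by linarith)
  have hnorm : Integrable fun y : E => ‖y‖ ^ s * Real.exp (-(1 / 2) * ‖y‖ ^ 2) := by
    rw [integrable_fun_norm_addHaar volume (f := fun r => r ^ s * Real.exp (-(1 / 2) * r ^ 2))]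
    refine hradial.congr_fun (fun r hr => ?_) measurableSet_Ioi
    beta_reduce
    rw [add_sub_assoc, ← Nat.cast_pred Module.finrank_pos, Real.rpow_add hr, Real.rpow_natCast,
      smul_eq_mul]
    ring
  rw [integrable_stdGaussian_iff]
  refine (hnorm.const_mul ((2 * Real.pi) ^ (-(Module.finrank ℝ E / 2 : ℝ)))).congr
    (.of_forall fun y => ?_)
  simp only [stdGaussianPDF, smul_eq_mul]
  ring_nf

theorem integrable_absPow {α : ℂ} {k : ℕ} (hα : -(k : ℝ) - 1 < α.re) :
    Integrable (absPow α k) (gaussianReal 0 1) := by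
  have hnorm : Integrable (fun t => |t| ^ (α.re + k)) (gaussianReal 0 1) := by
    have h := integrable_norm_rpow_stdGaussian (E := ℝ) (s := α.re + k)
      (by rw [Module.finrank_self]; push_cast; linarith)
    have hmap := measurePreserving_inner_stdGaussian (u := (1 : ℝ)) (by simp)
    have hmeas : Measurable fun t : ℝ => |t| ^ (α.re + k) := by fun_prop
    rw [← hmap.map_eq, integrable_map_measure hmeas.aestronglyMeasurable hmap.aemeasurable]
    simpa [Function.comp_def] using h
  refine hnorm.mono' (Measurable.aestronglyMeasurable ?_) (.of_forall (norm_absPow_le α k))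
  unfold absPow
  fun_prop

theorem hasGaussianMoments_absPow {α : ℂ} {k : ℕ} (hα : -(k : ℝ) - 1 < α.re) :
    HasGaussianMoments (absPow α k) := fun m => by
  have hpow (t : ℝ) : (t : ℂ) ^ m * absPow α k t = absPow α (k + m) t := by
    rw [absPow, absPow]
    ring
  simp only [hpow]
  exact integrable_absPow (by push_cast; linarith [m.cast_nonneg (α := ℝ)])

theorem two_cpow_mul_Gamma_div_Gamma_one_half {α : ℂ} (hα : -1 < α.re) :
    2 ^ (α / 2) * Complex.Gamma ((α + 1) / 2) / Complex.Gamma (1 / 2) =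
      Complex.Gamma (α + 1) * (2 ^ (-α / 2) / Complex.Gamma ((α + 2) / 2)) := by
  have hdup : Complex.Gamma ((α + 1) / 2) * Complex.Gamma ((α + 2) / 2) =
      Complex.Gamma (α + 1) * 2 ^ (-α) * (√Real.pi : ℝ) := by
    convert Complex.Gamma_mul_Gamma_add_half ((α + 1) / 2) using 4 <;> ring
  have hΓ : Complex.Gamma ((α + 2) / 2) ≠ 0 := by
    refine Complex.Gamma_ne_zero_of_re_pos ?_
    rw [Complex.div_ofNat_re, Complex.add_re, Complex.re_ofNat]
    linarith
  have hpi : Complex.Gamma (1 / 2) = (√Real.pi : ℝ) := by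
    rw [← Real.Gamma_one_half_eq, ← Complex.Gamma_ofReal, Complex.ofReal_div, Complex.ofReal_one,
      Complex.ofReal_ofNat]
  have hpi_ne : ((√Real.pi : ℝ) : ℂ) ≠ 0 :=
    Complex.ofReal_ne_zero.2 (Real.sqrt_pos.2 Real.pi_pos).ne'
  have h2 : (2 : ℂ) ^ (-α / 2) = 2 ^ (α / 2) * 2 ^ (-α) := by
    rw [← Complex.cpow_add _ _ two_ne_zero]
    ring_nf
  rw [hpi, ← mul_div_assoc, div_eq_div_iff hpi_ne hΓ, h2]
  linear_combination (2 : ℂ) ^ (α / 2) * hdup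

theorem integral_absPow_zero {α : ℂ} (hα : -1 < α.re) :
    ∫ t, absPow α 0 t ∂(gaussianReal 0 1) =
      Complex.Gamma (α + 1) * (2 ^ (-α / 2) / Complex.Gamma ((α + 2) / 2)) := by
  have hsphere (ω : Metric.sphere (0 : ℝ) 1) : absPow α 0 ω = 1 := by
    have hω : |(ω : ℝ)| = 1 := norm_eq_of_mem_sphere ω
    simp [absPow, hω]
  have : NeZero (volume : Measure ℝ).toSphere := ⟨Measure.toSphere_ne_zero _⟩
  have hpolar := integral_homogeneous_stdGaussian (E := ℝ) (F := absPow α 0) (β := α)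
    (fun r hr t => by rw [smul_eq_mul, absPow_mul, absPow_of_pos _ _ hr, Nat.cast_zero, add_zero])
    (by rw [Module.finrank_self, Nat.cast_one, Complex.add_re, Complex.one_re]; linarith)
  have hmap := integral_comp_inner_stdGaussian (u := (1 : ℝ)) (by simp)
    (integrable_absPow (α := α) (k := 0) (by simpa using hα)).aestronglyMeasurable
  simp only [RCLike.inner_apply, conj_trivial, mul_one] at hmap
  rw [← hmap, hpolar, ← two_cpow_mul_Gamma_div_Gamma_one_half hα]
  simp only [hsphere, average_const, Module.finrank_self, Nat.cast_one, mul_one]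

theorem two_cpow_div_Gamma_add_two (α : ℂ) :
    (2 : ℂ) ^ (-α / 2) / Complex.Gamma ((α + 2) / 2) =
      (α + 2) * (2 ^ (-(α + 2) / 2) / Complex.Gamma ((α + 2 + 2) / 2)) := by
  have h2 : (2 : ℂ) ^ (-α / 2) = 2 * 2 ^ (-(α + 2) / 2) := by
    rw [show -α / 2 = 1 + -(α + 2) / 2 by ring, Complex.cpow_add _ _ two_ne_zero, Complex.cpow_one]
  have hΓ : (α + 2 + 2) / 2 = (α + 2) / 2 + 1 := by ring
  rw [h2, div_eq_mul_inv, Complex.one_div_Gamma_eq_self_mul_one_div_Gamma_add_one, hΓ]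
  ring

theorem integral_absPow_mul_hermite_add_two {α : ℂ} {k : ℕ}
    (hα : -((k + 2 : ℕ) : ℝ) - 1 < α.re) :
    ∫ t, absPow α (k + 2) t * aeval (t : ℂ) (hermite (k + 2)) ∂(gaussianReal 0 1) =
      (∫ t, absPow (α + 2) (k + 1) t * aeval (t : ℂ) (hermite (k + 1)) ∂(gaussianReal 0 1)) -
        (k + 1) * ∫ t, absPow (α + 2) k t * aeval (t : ℂ) (hermite k) ∂(gaussianReal 0 1) := by
  have hae := absPow_add_two_ae_eq α k
  rw [(hasGaussianMoments_absPow hα).integral_mul_hermite_add_two]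
  congr 1
  · refine integral_congr_ae ?_
    filter_upwards [hae] with t ht
    rw [ht, mul_absPow]
  · refine congrArg _ (integral_congr_ae ?_)
    filter_upwards [hae] with t ht
    rw [ht]

theorem integral_absPow_mul_hermite {α : ℂ} {k : ℕ} (hα : -(k : ℝ) - 1 < α.re) :
    ∫ t, absPow α k t * aeval (t : ℂ) (hermite k) ∂(gaussianReal 0 1) =
      Complex.Gamma (α + k + 1) * (2 ^ (-α / 2) / Complex.Gamma ((α + 2) / 2)) := by
  induction k using Nat.twoStepInduction generalizing α with
  | zero => simpa using integral_absPow_zero (by simpa using hα)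
  | one =>
    have hre : 0 < (α + 2).re := by
      rw [Complex.add_re, Complex.re_ofNat]
      push_cast at hα
      linarith
    have hne : α + 2 ≠ 0 := fun h => by simp [h] at hre
    have hae : (fun t : ℝ => absPow α 1 t * aeval (t : ℂ) (hermite 1)) =ᵐ[gaussianReal 0 1]
        absPow (α + 2) 0 := by
      filter_upwards [absPow_add_two_ae_eq α 0] with t ht
      rw [hermite_one, aeval_X, mul_comm, mul_absPow, ht]
    rw [integral_congr_ae hae, integral_absPow_zero (by linarith), Complex.Gamma_add_one _ hne,
      two_cpow_div_Gamma_add_two α, Nat.cast_one, add_assoc α 1, one_add_one_eq_two]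
    ring
  | more k ih ih' =>
    have hre : 0 < (α + 2 + k + 1).re := by
      simp only [Complex.add_re, Complex.natCast_re, Complex.re_ofNat, Complex.one_re]
      push_cast at hα
      linarith
    have hne : α + 2 + k + 1 ≠ 0 := fun h => by simp [h] at hre
    have hα₀ : -(k : ℝ) - 1 < (α + 2).re := by
      rw [Complex.add_re, Complex.re_ofNat]
      push_cast at hα
      linarith
    have hα₁ : -((k + 1 : ℕ) : ℝ) - 1 < (α + 2).re := by
      push_cast
      linarith
    have hΓ : Complex.Gamma (α + 2 + (k + 1 : ℕ) + 1) =
        (α + 2 + k + 1) * Complex.Gamma (α + 2 + k + 1) := by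
      rw [← Complex.Gamma_add_one _ hne, Nat.cast_succ, ← add_assoc]
    have hshift : α + (k + 2 : ℕ) + 1 = α + 2 + k + 1 := by push_cast; ring
    rw [integral_absPow_mul_hermite_add_two hα, ih' hα₁, ih hα₀, hΓ, hshift,
      two_cpow_div_Gamma_add_two α]
    ring

end AbsPow

section DualRadon

theorem exists_norm_eq_one_and_eq_norm_smul {E : Type*} [NormedAddCommGroup E] [NormedSpace ℝ E]
    [Nontrivial E] (x : E) :
    ∃ u : E, ‖u‖ = 1 ∧ x = ‖x‖ • u := by
  rcases eq_or_ne x 0 with rfl | hx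
  · obtain ⟨u, hu⟩ := exists_norm_eq E zero_le_one
    exact ⟨u, hu, by simp⟩
  · exact ⟨‖x‖⁻¹ • x, norm_smul_inv_norm hx, (smul_inv_smul₀ (norm_ne_zero_iff.2 hx) x).symm⟩

variable {E : Type*} [NormedAddCommGroup E] [InnerProductSpace ℝ E] [FiniteDimensional ℝ E]
  {k : ℕ} {P : E → ℂ}

theorem IsSolidHarmonic.absPow_inner_mul_smul (hP : IsSolidHarmonic k P) (α : ℂ) (u : E) {r : ℝ}
    (hr : 0 < r) (y : E) :
    absPow α k ⟪u, r • y⟫ * P (r • y) = (r : ℂ) ^ (α + 2 * k) * (absPow α k ⟪u, y⟫ * P y) := by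
  have hpow : (r : ℂ) ^ (α + 2 * k) = (r : ℂ) ^ (α + k) * (r : ℂ) ^ k := by
    rw [two_mul, ← add_assoc, ← Complex.cpow_natCast,
      ← Complex.cpow_add _ _ (Complex.ofReal_ne_zero.2 hr.ne')]
  rw [real_inner_smul_right, absPow_mul, absPow_of_pos α k hr, hP.map_smul, hpow]
  ring

variable [Nontrivial E] [MeasurableSpace E] [BorelSpace E] {α : ℂ}

theorem IsSolidHarmonic.average_absPow_inner_mul (hP : IsSolidHarmonic k P)
    (hα : -(k : ℝ) - 1 < α.re) {u : E} (hu : ‖u‖ = 1) :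
    ⨍ ω : Metric.sphere (0 : E) 1, absPow α k ⟪u, ω⟫ * P ω ∂(volume : Measure E).toSphere =
      2 ^ (-(α + k)) * Complex.Gamma (α + k + 1) * Complex.Gamma (Module.finrank ℝ E / 2) /
        (Complex.Gamma ((α + 2) / 2) * Complex.Gamma ((α + 2 * k + Module.finrank ℝ E) / 2)) *
          P u := by
  have hdim : (1 : ℝ) ≤ Module.finrank ℝ E := by
    exact_mod_cast Module.finrank_pos (R := ℝ) (M := E)
  have hβ : 0 < (α + 2 * k + Module.finrank ℝ E).re := by
    simp only [Complex.add_re, Complex.natCast_re, Complex.mul_re, Complex.re_ofNat,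
      Complex.im_ofNat, zero_mul, sub_zero]
    linarith [k.cast_nonneg (α := ℝ)]
  have hpolar := integral_homogeneous_stdGaussian
    (F := fun y => absPow α k ⟪u, y⟫ * P y)
    (fun r hr y => hP.absPow_inner_mul_smul α u hr y) hβ
  rw [hP.integral_comp_inner_mul (hasGaussianMoments_absPow hα) hu,
    integral_absPow_mul_hermite hα] at hpolar
  have h2 : (2 : ℂ) ^ (-α / 2) = 2 ^ ((α + 2 * k) / 2) * 2 ^ (-(α + k)) := by
    rw [← Complex.cpow_add _ _ two_ne_zero]
    ring_nf
  have h2_ne : (2 : ℂ) ^ ((α + 2 * k) / 2) ≠ 0 := by simp [Complex.cpow_eq_zero_iff]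
  have hΓβ : Complex.Gamma ((α + 2 * k + Module.finrank ℝ E) / 2) ≠ 0 :=
    Complex.Gamma_ne_zero_of_re_pos (by rw [Complex.div_ofNat_re]; positivity)
  have hΓdim : Complex.Gamma (Module.finrank ℝ E / 2) ≠ 0 :=
    Complex.Gamma_ne_zero_of_re_pos (by simpa using Module.finrank_pos)
  rw [h2] at hpolar
  refine mul_left_cancel₀ (div_ne_zero (mul_ne_zero h2_ne hΓβ) hΓdim) (hpolar.symm.trans ?_)
  generalize Complex.Gamma ((α + 2 * k + Module.finrank ℝ E) / 2) = Γβ at hΓβ ⊢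
  field_simp

theorem dualRadon_harmonic_general (hP : IsSolidHarmonic k P) (hα : -(k : ℝ) - 1 < α.re) (x : E) :
    ⨍ ω : Metric.sphere (0 : E) 1, ((|⟪x, ω⟫| : ℝ) : ℂ) ^ α * P (⟪x, (ω : E)⟫ • (ω : E))
        ∂(volume : Measure E).toSphere =
      (2 ^ (-(α + k)) * Complex.Gamma (α + k + 1) * Complex.Gamma ((Module.finrank ℝ E : ℂ) / 2) /
          (Complex.Gamma ((α + 2) / 2) *
            Complex.Gamma ((α + 2 * k + Module.finrank ℝ E) / 2))) *
        ((‖x‖ : ℝ) : ℂ) ^ α * P x := by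
  obtain ⟨u, hu, hxu⟩ := exists_norm_eq_one_and_eq_norm_smul x
  have hpoint (ω : E) : ((|⟪x, ω⟫| : ℝ) : ℂ) ^ α * P (⟪x, ω⟫ • ω) =
      absPow α k ‖x‖ * (absPow α k ⟪u, ω⟫ * P ω) := by
    rw [hP.map_smul, ← mul_assoc, ← mul_assoc, ← absPow_mul, ← real_inner_smul_left, ← hxu, absPow]
  have hPx : P x = (‖x‖ : ℂ) ^ k * P u := by rw [← hP.map_smul, ← hxu]
  simp only [hpoint]
  rw [average_eq, integral_const_mul, ← mul_smul_comm, ← average_eq,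
    hP.average_absPow_inner_mul hα hu, hPx, absPow, abs_norm]
  ring

end DualRadon

theorem dualRadonC_eq_average (n : ℕ) (φ : ℝ → EuclideanSpace ℝ (Fin n) → ℂ)
    (x : EuclideanSpace ℝ (Fin n)) :
    dualRadonC n φ x = ⨍ ω : Metric.sphere (0 : EuclideanSpace ℝ (Fin n)) 1, φ ⟪x, ω⟫ ω
      ∂(volume : Measure (EuclideanSpace ℝ (Fin n))).toSphere := by
  rw [average_eq, Complex.real_smul, Complex.ofReal_inv, ← one_div]
  rfl

theorem laplacian_eq_laplacian_of_contDiff {n : ℕ} {P : EuclideanSpace ℝ (Fin n) → ℂ}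
    (hP : ContDiff ℝ (⊤ : ℕ∞) P) : laplacian P = Laplacian.laplacian P := by
  ext x
  rw [laplacian_eq_sum_dirDeriv hP (EuclideanSpace.basisFun (Fin n) ℝ)]
  simp only [EuclideanSpace.basisFun_apply]
  rfl

theorem dualRadon_harmonic {n : ℕ} (hn : 2 ≤ n) (k : ℕ)
    (P : EuclideanSpace ℝ (Fin n) → ℂ) (hsmooth : ContDiff ℝ ⊤ P)
    (hhom : ∀ (r : ℝ), 0 ≤ r → ∀ x, P (r • x) = (r : ℂ) ^ k * P x)
    (hharm : ∀ x, laplacian P x = 0)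
    (α : ℂ) (hα : -(k : ℝ) - 1 < α.re) :
    ∀ x : EuclideanSpace ℝ (Fin n),
      dualRadonC n (fun p ω => ((|p| : ℝ) : ℂ) ^ α * P (p • ω)) x =
        (2 ^ (-(α + k)) * Complex.Gamma (α + k + 1) * Complex.Gamma ((n : ℂ) / 2) /
            (Complex.Gamma ((α + 2) / 2) * Complex.Gamma ((α + 2 * k + n) / 2))) *
          ((‖x‖ : ℝ) : ℂ) ^ α * P x := by
  intro x
  have : Nontrivial (Fin n) := Fin.nontrivial_iff_two_le.2 hn
  have hP : IsSolidHarmonic k P :=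
    { contDiff := hsmooth.of_le le_top
      map_smul_of_pos := fun r hr => hhom r hr.le
      laplacian_eq_zero := by
        rw [← laplacian_eq_laplacian_of_contDiff (hsmooth.of_le le_top)]
        exact funext hharm }
  rw [dualRadonC_eq_average, dualRadon_harmonic_general hP hα x, finrank_euclideanSpace_fin]
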